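/- Let (p_k)_{k≥0} be a critical offspring distribution with p_1 < 1, pgf Φ, and tree-size probabilities (q_n). Then for every real α < 0 and every real t > 1: ∑_{n≥1} q_n (n−1+t)^α = (t−1)^α ∫_0^1 [1 − Γ(−α)^{-1} ∫_{(t−1)·log(Φ(η)/η)}^{∞} v^{−α−1} e^{−v} dv] dη. -/

import Mathlib

open MeasureTheory

open Set Real

/-- The power series of a summable nonnegative sequence is continuous on the unit interval. -/
theorem continuousOn_tsum_mul_pow {q : ℕ → ℝ} (hq : ∀ n, 0 ≤ q n) (hs : Summable q) :
    ContinuousOn (fun z : ℝ => ∑' n, q n * z ^ n) (Icc 0 1) := by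
  refine continuousOn_tsum (fun n => by fun_prop) hs fun n z hz => ?_
  rw [norm_of_nonneg (mul_nonneg (hq n) (pow_nonneg hz.1 n))]
  exact mul_le_of_le_one_right (hq n) (pow_le_one₀ hz.1 hz.2)

theorem summable_mul_pow {q : ℕ → ℝ} (hq : ∀ n, 0 ≤ q n) (hs : Summable q) {z : ℝ}
    (hz : z ∈ Icc (0 : ℝ) 1) : Summable fun n => q n * z ^ n :=
  hs.of_nonneg_of_le (fun n => mul_nonneg (hq n) (pow_nonneg hz.1 n))
    fun n => mul_le_of_le_one_right (hq n) (pow_le_one₀ hz.1 hz.2)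

/-- The power series of a nonnegative sequence is strictly increasing on the unit interval as soon
as a coefficient of positive degree is positive. -/
theorem strictMonoOn_tsum_mul_pow {q : ℕ → ℝ} (hq : ∀ n, 0 ≤ q n) (hs : Summable q)
    {m : ℕ} (hm : m ≠ 0) (hqm : 0 < q m) :
    StrictMonoOn (fun z : ℝ => ∑' n, q n * z ^ n) (Icc 0 1) := by
  intro a ha b hb hab
  refine Summable.tsum_lt_tsum (i := m)
    (fun n => mul_le_mul_of_nonneg_left (pow_le_pow_left₀ ha.1 hab.le n) (hq n)) ?_
    (summable_mul_pow hq hs ha) (summable_mul_pow hq hs hb)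
  exact mul_lt_mul_of_pos_left (pow_lt_pow_left₀ hab ha.1 hm) hqm

theorem integrableOn_rpow_mul_exp_neg_mul_Ioi {a r : ℝ} (ha : 0 < a) (hr : 0 < r) :
    IntegrableOn (fun v : ℝ => v ^ (a - 1) * exp (-(r * v))) (Ioi 0) := by
  simpa [neg_mul] using integrableOn_rpow_mul_exp_neg_mul_rpow (s := a - 1) (p := 1) (b := r)
    (by linarith) one_pos hr

theorem integral_rpow_mul_exp_neg_mul_Ioi_eq {a r : ℝ} (ha : 0 < a) (hr : 0 < r) :
    ∫ v in Ioi (0 : ℝ), v ^ (a - 1) * exp (-(r * v)) = r ^ (-a) * Gamma a := by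
  rw [integral_rpow_mul_exp_neg_mul_Ioi ha hr, one_div, inv_rpow hr.le, rpow_neg hr.le]

/-- Rescaling of the upper incomplete gamma integral. -/
theorem setIntegral_Ioi_rpow_mul_exp_neg_mul {a r L : ℝ} (hr : 0 < r) (hL : 0 ≤ L) :
    ∫ v in Ioi L, v ^ (a - 1) * exp (-(r * v)) =
      r ^ (-a) * ∫ v in Ioi (r * L), v ^ (a - 1) * exp (-v) := by
  have h := integral_comp_mul_left_Ioi (fun v : ℝ => v ^ (a - 1) * exp (-v)) L hr
  have h' : ∫ v in Ioi L, (r * v) ^ (a - 1) * exp (-(r * v)) =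
      r ^ (a - 1) * ∫ v in Ioi L, v ^ (a - 1) * exp (-(r * v)) := by
    rw [← integral_const_mul]
    refine setIntegral_congr_fun measurableSet_Ioi fun v hv => ?_
    rw [mul_rpow hr.le (hL.trans (le_of_lt hv)), mul_assoc]
  rw [h', smul_eq_mul, rpow_sub_one hr.ne'] at h
  rw [rpow_neg hr.le]
  have := rpow_pos_of_pos hr a
  field_simp at h ⊢
  linarith

/-- Splitting the gamma integral at `L ≥ 0`. -/
theorem setIntegral_Ioi_indicator_Iio_rpow_mul_exp_neg_mul {a r L : ℝ} (ha : 0 < a) (hr : 0 < r)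
    (hL : 0 ≤ L) :
    ∫ v in Ioi (0 : ℝ), (Iio L).indicator (fun v => v ^ (a - 1) * exp (-(r * v))) v =
      r ^ (-a) * Gamma a *
        (1 - (Gamma a)⁻¹ * ∫ v in Ioi (r * L), v ^ (a - 1) * exp (-v)) := by
  have hg := integrableOn_rpow_mul_exp_neg_mul_Ioi ha hr
  have h := integral_add_compl (measurableSet_Iio (a := L)) hg
  rw [Measure.restrict_restrict measurableSet_Iio,
    Measure.restrict_restrict measurableSet_Iio.compl, compl_Iio] at h
  have hI : ∫ v in Ici L ∩ Ioi 0, v ^ (a - 1) * exp (-(r * v)) =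
      ∫ v in Ioi L, v ^ (a - 1) * exp (-(r * v)) := by
    refine setIntegral_congr_set ?_
    rw [← inter_eq_left.2 (Ioi_subset_Ioi hL)]
    exact Ioi_ae_eq_Ici.symm.inter (Filter.EventuallyEq.refl _ _)
  rw [hI, integral_rpow_mul_exp_neg_mul_Ioi_eq ha hr,
    setIntegral_Ioi_rpow_mul_exp_neg_mul hr hL] at h
  rw [integral_indicator measurableSet_Iio, Measure.restrict_restrict measurableSet_Iio]
  have := (Gamma_pos_of_pos ha).ne'
  field_simp
  linarith

/-- A negative power moment as a Mellin transform of the generating function. -/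
theorem tsum_mul_rpow_mul_Gamma {q : ℕ → ℝ} (hq : ∀ n, 0 ≤ q n) (hs : Summable q)
    {a r : ℝ} (ha : 0 < a) (hr : 0 < r) :
    (∑' n : ℕ, q n * ((n : ℝ) + r) ^ (-a)) * Gamma a =
      ∫ v in Ioi (0 : ℝ), v ^ (a - 1) * exp (-(r * v)) * ∑' n, q n * exp (-v) ^ n := by
  have hpos (n : ℕ) : 0 < (n : ℝ) + r := by positivity
  have hint (n : ℕ) : ∫ v in Ioi (0 : ℝ), q n * (v ^ (a - 1) * exp (-(((n : ℝ) + r) * v))) =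
      q n * ((n : ℝ) + r) ^ (-a) * Gamma a := by
    rw [integral_const_mul, integral_rpow_mul_exp_neg_mul_Ioi_eq ha (hpos n), mul_assoc]
  have hnorm (n : ℕ) :
      ∫ v in Ioi (0 : ℝ), ‖q n * (v ^ (a - 1) * exp (-(((n : ℝ) + r) * v)))‖ =
      q n * ((n : ℝ) + r) ^ (-a) * Gamma a := by
    rw [← hint n]
    refine setIntegral_congr_fun measurableSet_Ioi fun v hv => ?_
    exact norm_of_nonneg
      (mul_nonneg (hq n) (mul_nonneg (rpow_nonneg (le_of_lt hv) _) (exp_nonneg _)))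
  have hsum : Summable fun n : ℕ => q n * ((n : ℝ) + r) ^ (-a) * Gamma a := by
    refine Summable.mul_right _ ?_
    refine (hs.mul_right (r ^ (-a))).of_nonneg_of_le
      (fun n => mul_nonneg (hq n) (rpow_nonneg (hpos n).le _)) fun n => ?_
    refine mul_le_mul_of_nonneg_left ?_ (hq n)
    exact rpow_le_rpow_of_nonpos hr (by linarith [n.cast_nonneg (α := ℝ)]) (by linarith)
  have h := integral_tsum_of_summable_integral_norm (μ := volume.restrict (Ioi (0 : ℝ)))
    (F := fun (n : ℕ) (v : ℝ) => q n * (v ^ (a - 1) * exp (-(((n : ℝ) + r) * v))))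
    (fun n => (integrableOn_rpow_mul_exp_neg_mul_Ioi ha (hpos n)).const_mul _)
    (by simpa only [hnorm] using hsum)
  simp only [hint] at h
  rw [← tsum_mul_right, h]
  refine integral_congr_ae (.of_forall fun v => ?_)
  simp only
  rw [← tsum_mul_left]
  refine tsum_congr fun n => ?_
  rw [← exp_nat_mul, add_mul, neg_add, exp_add, mul_neg]
  ring

/-- Layer-cake exchange: `Y` is replaced by its superlevel sets inside a weighted integral. -/
theorem integral_mul_eq_integral_indicator_lt {g Y : ℝ → ℝ} {S : Set ℝ} (hS : MeasurableSet S)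
    (hg : IntegrableOn g S) (hY : Measurable Y) (hY01 : ∀ v ∈ S, Y v ∈ Icc (0 : ℝ) 1) :
    ∫ v in S, g v * Y v =
      ∫ η in Ioo (0 : ℝ) 1, ∫ v in S, {v | η < Y v}.indicator g v := by
  have hset : MeasurableSet {x : ℝ × ℝ | x.1 < Y x.2} :=
    measurableSet_lt measurable_fst (hY.comp measurable_snd)
  have hint : Integrable (fun x : ℝ × ℝ => {x : ℝ × ℝ | x.1 < Y x.2}.indicator (fun x => g x.2) x)
      ((volume.restrict (Ioo (0 : ℝ) 1)).prod (volume.restrict S)) :=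
    (Integrable.comp_snd hg _).indicator hset
  have hswap := integral_integral_swap
    (f := fun η v => {x : ℝ × ℝ | x.1 < Y x.2}.indicator (fun x => g x.2) (η, v)) hint
  refine Eq.trans ?_ hswap.symm
  refine setIntegral_congr_fun hS fun v hv => ?_
  have h : ∀ η, {x : ℝ × ℝ | x.1 < Y x.2}.indicator (fun x => g x.2) (η, v) =
      (Iio (Y v)).indicator (fun _ => g v) η := fun η => rfl
  simp only [h]
  have hI : Iio (Y v) ∩ Ioo 0 1 = Ioo 0 (Y v) := by
    ext x
    have := (hY01 v hv).2
    simp only [mem_inter_iff, mem_Iio, mem_Ioo]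
    constructor
    · rintro ⟨h1, h2, -⟩; exact ⟨h2, h1⟩
    · rintro ⟨h1, h2⟩; exact ⟨h2, h1, h2.trans_le this⟩
  rw [integral_indicator measurableSet_Iio, Measure.restrict_restrict measurableSet_Iio, hI,
    setIntegral_const, smul_eq_mul, Real.volume_real_Ioo_of_le (hY01 v hv).1]
  ring

/-- Theorem B.1 of the paper. For a critical offspring distribution with
`p 1 < 1`, pgf `Φ` and tree-size probabilities `q`, for every real `α < 0` and real `t > 1`:
`∑ q_n (n−1+t)^α = (t−1)^α ∫_0^1 [1 − Γ(−α)⁻¹ ∫_{(t−1)log(Φ(η)/η)}^∞ v^{−α−1}e^{−v} dv] dη`. -/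
theorem stmt14
    (p : ℕ → ℝ) (hp : ∀ k, 0 ≤ p k)
    (hpsum : ∑' k, p k = 1)
    (hcrit : ∑' k : ℕ, (k : ℝ) * p k = 1)
    (hp1 : p 1 < 1)
    (q : ℕ → ℝ) (hq0 : q 0 = 0) (hqnn : ∀ n, 0 ≤ q n)
    (hqsum : ∑' n, q n = 1)
    (hfix : ∀ z ∈ Set.Icc (0:ℝ) 1,
      (∑' n, q n * z ^ n) = z * ∑' k, p k * (∑' n, q n * z ^ n) ^ k)
    (α : ℝ) (hα : α < 0) (t : ℝ) (ht : 1 < t) :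
    (∑' n : ℕ, q n * ((n : ℝ) - 1 + t) ^ α) =
      (t - 1) ^ α *
        ∫ η in (0:ℝ)..1,
          (1 - (Real.Gamma (-α))⁻¹ *
            ∫ v in Set.Ioi ((t - 1) * Real.log ((∑' k, p k * η ^ k) / η)),
              v ^ (-α - 1) * Real.exp (-v)) := by
  have hs : Summable q := by
    by_contra h
    simp [tsum_eq_zero_of_not_summable h] at hqsum
  obtain ⟨m, hm, hqm⟩ : ∃ m, m ≠ 0 ∧ 0 < q m := by
    by_contra! h
    have : ∀ n, q n = 0 := fun n => by
      rcases eq_or_ne n 0 with rfl | hn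
      · exact hq0
      · exact le_antisymm (h n hn) (hqnn n)
    simp [this] at hqsum
  set y : ℝ → ℝ := fun z => ∑' n, q n * z ^ n with hy
  have hcont : ContinuousOn y (Icc 0 1) := continuousOn_tsum_mul_pow hqnn hs
  have hmono : StrictMonoOn y (Icc 0 1) := strictMonoOn_tsum_mul_pow hqnn hs hm hqm
  have hy0 : y 0 = 0 := by
    have h (n : ℕ) : q n * (0 : ℝ) ^ n = 0 := by cases n <;> simp [hq0]
    simp [hy, h]
  have hy1 : y 1 = 1 := by simpa [hy] using hqsum
  have hexp {v : ℝ} (hv : 0 ≤ v) : exp (-v) ∈ Icc (0 : ℝ) 1 :=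
    ⟨exp_nonneg _, exp_le_one_iff.2 (neg_nonpos.2 hv)⟩
  have hr : 0 < t - 1 := sub_pos.2 ht
  have ha : 0 < -α := neg_pos.2 hα
  have hG := Gamma_pos_of_pos ha
  have hlevel : ∀ η ∈ Ioo (0 : ℝ) 1, 0 ≤ log ((∑' k, p k * η ^ k) / η) ∧
      ∀ v, 0 < v → (η < y (exp (-|v|)) ↔ v < log ((∑' k, p k * η ^ k) / η)) := by
    intro η hη
    obtain ⟨z, hz, rfl⟩ : η ∈ y '' Icc 0 1 :=
      intermediate_value_Icc zero_le_one hcont (by rw [hy0, hy1]; exact Ioo_subset_Icc_self hη)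
    have hz0 : 0 < z := hz.1.lt_of_ne (by rintro rfl; simp [hy0] at hη)
    have hΦ : y z = z * ∑' k, p k * y z ^ k := hfix z hz
    have hratio : (∑' k, p k * y z ^ k) / y z = z⁻¹ := by
      have := hη.1.ne'
      rw [div_eq_iff this, eq_inv_mul_iff_mul_eq₀ hz0.ne']
      exact hΦ.symm
    rw [hratio, log_inv]
    refine ⟨neg_nonneg.2 (log_nonpos hz.1 hz.2), fun v hv => ?_⟩
    rw [abs_of_pos hv, hmono.lt_iff_lt hz (hexp hv.le), lt_neg, ← log_lt_iff_lt_exp hz0]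
  have hY : Continuous fun v => y (exp (-|v|)) :=
    hcont.comp_continuous (by fun_prop) fun v => hexp (abs_nonneg v)
  have hY01 : ∀ v ∈ Ioi (0 : ℝ), y (exp (-|v|)) ∈ Icc (0 : ℝ) 1 := fun v _ => by
    have h := hexp (abs_nonneg v)
    constructor
    · rw [← hy0]; exact hmono.monotoneOn (left_mem_Icc.2 zero_le_one) h h.1
    · rw [← hy1]; exact hmono.monotoneOn h (right_mem_Icc.2 zero_le_one) h.2
  have hmellin := tsum_mul_rpow_mul_Gamma hqnn hs ha hr
  have hlhs : ∑' n : ℕ, q n * ((n : ℝ) - 1 + t) ^ α =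
      ∑' n : ℕ, q n * ((n : ℝ) + (t - 1)) ^ (-(-α)) :=
    tsum_congr fun n => by rw [neg_neg]; congr 2; ring
  have habs : ∫ v in Ioi (0 : ℝ), v ^ (-α - 1) * exp (-((t - 1) * v)) * y (exp (-v)) =
      ∫ v in Ioi (0 : ℝ), v ^ (-α - 1) * exp (-((t - 1) * v)) * y (exp (-|v|)) :=
    setIntegral_congr_fun measurableSet_Ioi fun v hv => by
      simp only [abs_of_pos (mem_Ioi.1 hv)]
  have hinner : ∀ η ∈ Ioo (0 : ℝ) 1,
      ∫ v in Ioi (0 : ℝ), {v | η < y (exp (-|v|))}.indicator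
        (fun v => v ^ (-α - 1) * exp (-((t - 1) * v))) v =
      (t - 1) ^ (-(-α)) * Gamma (-α) * (1 - (Gamma (-α))⁻¹ *
        ∫ v in Ioi ((t - 1) * log ((∑' k, p k * η ^ k) / η)), v ^ (-α - 1) * exp (-v)) := by
    intro η hη
    obtain ⟨hL, hiff⟩ := hlevel η hη
    rw [← setIntegral_Ioi_indicator_Iio_rpow_mul_exp_neg_mul ha hr hL]
    refine setIntegral_congr_fun measurableSet_Ioi fun v hv => ?_
    simp only [indicator_apply, mem_ofPred_eq, mem_Iio, hiff v hv]
  rw [habs, integral_mul_eq_integral_indicator_lt measurableSet_Ioi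
    (integrableOn_rpow_mul_exp_neg_mul_Ioi ha hr) hY.measurable hY01,
    setIntegral_congr_fun measurableSet_Ioo hinner, integral_const_mul, ← hlhs, neg_neg] at hmellin
  rw [intervalIntegral.integral_of_le zero_le_one, integral_Ioc_eq_integral_Ioo]
  refine mul_right_cancel₀ hG.ne' (hmellin.trans ?_)
  ring
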